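/- Let N/ℚ be a Galois extension of number fields with Gal(N/ℚ) isomorphic to PSL₂(𝔽₇), and let K₇ₐ and K₇ᵦ be any two subfields of N of degree 7 over ℚ. Then the discriminants of K₇ₐ and K₇ᵦ are equal: D_{K₇ₐ} = D_{K₇ᵦ}. -/

import Mathlib

open scoped MatrixGroups NumberField

section Diff
open Polynomial

variable {G : Type*} [Group G] [Finite G] {L : Type*} [Field L] [NumberField L]
  [MulSemiringAction G L]

/-- The ideal generated by `g x - x`. -/
noncomputable def ramI (g : G) : Ideal (𝓞 L) := Ideal.span (Set.range fun x : 𝓞 L => g • x - x)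

theorem ramI_mem (g : G) (x : 𝓞 L) : g • x - x ∈ ramI (L := L) g :=
  Ideal.subset_span ⟨x, rfl⟩

theorem prod_ramI_le (K : Type*) [Field K] [NumberField K] [Algebra K L] [IsGaloisGroup G K L]
    [Fintype G] [DecidableEq G] :
    ∏ g ∈ Finset.univ.erase (1 : G), ramI (L := L) g ≤ differentIdeal (𝓞 K) (𝓞 L) := by
  have hG : IsGalois K L := IsGaloisGroup.isGalois G K L
  unfold ramI
  rw [Ideal.prod_span, Ideal.span_le]
  intro z hz
  rw [Set.mem_finsetProd] at hz
  obtain ⟨f, hf, rfl⟩ := hz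
  have hx : ∀ g : G, ∃ x : 𝓞 L, g ∈ Finset.univ.erase (1 : G) → f g = g • x - x := by
    intro g
    by_cases hg : g ∈ Finset.univ.erase (1 : G)
    · obtain ⟨x, hx⟩ := hf hg
      exact ⟨x, fun _ => hx.symm⟩
    · exact ⟨0, fun h => absurd h hg⟩
  choose x hx using hx
  rw [Finset.prod_congr rfl hx]
  -- key claim
  have key : ∀ y : L, y ∈ Submodule.traceDual (𝓞 K) K (1 : Submodule (𝓞 L) L) → ∀ S : Finset G,
      ∀ c : 𝓞 L, ∑ h : G, ((∏ g ∈ S, (g • x g - h • x g) : 𝓞 L) : L) * h • ((c : L) * y) ∈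
        (1 : Submodule (𝓞 L) L) := by
    intro y hy S
    induction S using Finset.induction_on with
    | empty =>
      intro c
      rw [Submodule.mem_traceDual] at hy
      obtain ⟨a, ha⟩ := hy (c : L) (Submodule.mem_one.mpr ⟨c, rfl⟩)
      refine Submodule.mem_one.mpr ⟨algebraMap (𝓞 K) (𝓞 L) a, ?_⟩
      have h1 : algebraMap K L (algebraMap (𝓞 K) K a) = algebraMap (𝓞 L) L (algebraMap (𝓞 K) (𝓞 L) a) := by
        rw [← IsScalarTower.algebraMap_apply, ← IsScalarTower.algebraMap_apply]
      rw [← h1, ha, Algebra.traceForm_apply, trace_eq_sum_automorphisms]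
      simp only [Finset.prod_empty, map_one, one_mul]
      rw [← (IsGaloisGroup.mulEquivAlgEquiv G K L).toEquiv.sum_comp]
      refine Finset.sum_congr rfl fun g _ => ?_
      simp [mul_comm]
    | insert g S hg ih =>
      intro c
      have := Submodule.sub_mem _ (Submodule.smul_mem _ (g • x g) (ih c)) (ih (x g * c))
      convert this using 1
      rw [Finset.smul_sum, ← Finset.sum_sub_distrib]
      refine Finset.sum_congr rfl fun h _ => ?_
      rw [Finset.prod_insert hg, Algebra.smul_def]
      simp only [map_mul, map_sub, smul_mul', algebraMap.smul']
      ring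
  have : (algebraMap (𝓞 L) L) (∏ g ∈ Finset.univ.erase (1 : G), (g • x g - x g)) ∈
      IsLocalization.coeSubmodule L (differentIdeal (𝓞 K) (𝓞 L)) := by
    rw [coeSubmodule_differentIdeal (𝓞 K) K, Submodule.mem_div_iff_forall_mul_mem]
    intro y hy
    have := key y hy (Finset.univ.erase 1) 1
    rw [Finset.sum_eq_single 1] at this
    · simpa using this
    · intro h _ hh
      rw [Finset.prod_eq_zero (Finset.mem_erase.mpr ⟨hh, Finset.mem_univ h⟩)]
      · simp
      · simp
    · simp
  obtain ⟨d, hd, hd'⟩ := this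
  have e : d = ∏ g ∈ Finset.univ.erase (1 : G), (g • x g - x g) :=
    FaithfulSMul.algebraMap_injective (𝓞 L) L hd'
  rwa [e] at hd


theorem minpoly_aux (K : Type*) [Field K] [NumberField K] [Algebra K L] [IsGaloisGroup G K L]
    [Fintype G] [DecidableEq G] (π : 𝓞 L)
    (hπ : Algebra.adjoin K {algebraMap (𝓞 L) L π} = ⊤) :
    aeval π (derivative (minpoly (𝓞 K) π)) ∈ ∏ g ∈ Finset.univ.erase (1 : G), ramI (L := L) g := by
  have hG : IsGalois K L := IsGaloisGroup.isGalois G K L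
  have hint : IsIntegral (𝓞 K) π := Algebra.IsIntegral.isIntegral π
  obtain ⟨q, hq, hdeg, hmon⟩ := Polynomial.lifts_and_natDegree_eq_and_monic
    (Algebra.IsInvariant.charpoly_mem_lifts (𝓞 K) (𝓞 L) G π) (MulSemiringAction.monic_charpoly G π)
  have hq0 : aeval π q = 0 := by
    rw [aeval_def, ← eval_map, hq, MulSemiringAction.eval_charpoly]
  have hdvd : minpoly (𝓞 K) π ∣ q := minpoly.isIntegrallyClosed_dvd hint hq0
  have hcard : (MulSemiringAction.charpoly G π).natDegree = Nat.card G := by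
    rw [MulSemiringAction.charpoly_eq, natDegree_prod_of_monic _ _ (fun g _ => monic_X_sub_C _)]
    simp
  have hmd : (minpoly (𝓞 K) π).natDegree = Nat.card G := by
    rw [IsGaloisGroup.card_eq_finrank G K L]
    have h1 : minpoly K (algebraMap (𝓞 L) L π) = (minpoly (𝓞 K) π).map (algebraMap (𝓞 K) K) :=
      minpoly.isIntegrallyClosed_eq_field_fractions K L hint
    have h2 : (minpoly (𝓞 K) π).natDegree = (minpoly K (algebraMap (𝓞 L) L π)).natDegree := by
      rw [h1, (minpoly.monic hint).natDegree_map]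
    rw [h2, ← Field.primitive_element_iff_minpoly_natDegree_eq]
    rw [eq_top_iff]
    intro y _
    have : y ∈ Algebra.adjoin K {algebraMap (𝓞 L) L π} := by rw [hπ]; trivial
    exact IntermediateField.algebra_adjoin_le_adjoin _ _ this
  have heq : q = minpoly (𝓞 K) π :=
    Polynomial.eq_of_monic_of_dvd_of_natDegree_le (minpoly.monic hint) hmon hdvd
      (by rw [hdeg, hcard, hmd])
  rw [← heq, aeval_def, ← eval_map, ← derivative_map, hq, MulSemiringAction.charpoly_eq,
    ← Finset.mul_prod_erase _ _ (Finset.mem_univ (1 : G))]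
  rw [derivative_mul]
  simp only [one_smul, derivative_sub, derivative_X, derivative_C, sub_zero, one_mul, eval_add,
    eval_mul, eval_sub, eval_X, eval_C, sub_self, zero_mul, add_zero, eval_prod]
  refine Ideal.prod_mem_prod fun g _ => ?_
  rw [← neg_sub]
  exact neg_mem (ramI_mem g π)

theorem pow_unif {R : Type*} [CommRing R] [IsDedekindDomain R] {P : Ideal R} (hP : P.IsPrime)
    (h0 : P ≠ ⊥) {x : R} (hx : x ∈ P) (hx2 : x ∉ P ^ 2) (n : ℕ) :
    x ^ n ∈ P ^ n ∧ x ^ n ∉ P ^ (n + 1) := by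
  refine ⟨Ideal.pow_mem_pow hx n, fun h => ?_⟩
  obtain ⟨J, hJ⟩ := Ideal.dvd_span_singleton.mpr hx
  have hPJ : ¬ P ∣ J := by
    rintro ⟨J', rfl⟩
    apply hx2
    rw [← Ideal.dvd_span_singleton, hJ, sq, ← mul_assoc]
    exact dvd_mul_right _ _
  rw [← Ideal.dvd_span_singleton, ← Ideal.span_singleton_pow, hJ, mul_pow, pow_succ,
    mul_dvd_mul_iff_left (pow_ne_zero _ h0)] at h
  exact hPJ ((Ideal.prime_of_isPrime h0 hP).dvd_of_dvd_pow h)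

attribute [local instance] Ideal.Quotient.field in
theorem surj_aux (K : Type*) [Field K] [NumberField K] [Algebra K L] [IsGaloisGroup G K L]
    (P : Ideal (𝓞 L)) [hPm : P.IsMaximal] (hP0 : P ≠ ⊥)
    (hin : ∀ (g : G) (x : 𝓞 L), g • x - x ∈ P) (b : 𝓞 L) :
    ∃ a : 𝓞 K, b - algebraMap (𝓞 K) (𝓞 L) a ∈ P := by
  let p := P.under (𝓞 K)
  have : p.IsMaximal := Ideal.IsMaximal.under (𝓞 K) P
  have hfin : Finite (𝓞 L ⧸ P) := Ideal.finiteQuotientOfFreeOfNeBot P hP0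
  have hss : Subsingleton ((𝓞 L ⧸ P) ≃ₐ[𝓞 K ⧸ p] (𝓞 L ⧸ P)) := by
    refine ⟨fun σ τ => ?_⟩
    have triv : ∀ σ : (𝓞 L ⧸ P) ≃ₐ[𝓞 K ⧸ p] (𝓞 L ⧸ P), σ = 1 := by
      intro σ
      obtain ⟨g, rfl⟩ := Ideal.Quotient.stabilizerHom_surjective G p P σ
      ext x
      obtain ⟨x, rfl⟩ := Ideal.Quotient.mk_surjective x
      rw [Ideal.Quotient.stabilizerHom_apply]
      exact Ideal.Quotient.eq.mpr (hin g x)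
    rw [triv σ, triv τ]
  have hfin2 : FiniteDimensional (𝓞 K ⧸ p) (𝓞 L ⧸ P) := Module.Finite.of_finite
  have hfin3 : Finite (𝓞 K ⧸ p) := Finite.of_injective _ (algebraMap (𝓞 K ⧸ p) (𝓞 L ⧸ P)).injective
  have hgal : IsGalois (𝓞 K ⧸ p) (𝓞 L ⧸ P) := inferInstance
  have h1 : Module.finrank (𝓞 K ⧸ p) (𝓞 L ⧸ P) = 1 := by
    rw [← IsGalois.card_aut_eq_finrank]
    exact Nat.card_unique
  obtain ⟨a, ha⟩ := (bijective_algebraMap_of_linearEquiv (LinearEquiv.ofFinrankEq (𝓞 K ⧸ p) (𝓞 L ⧸ P) (by simp [h1]))).2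
    (Ideal.Quotient.mk P b)
  obtain ⟨a, rfl⟩ := Ideal.Quotient.mk_surjective a
  refine ⟨a, ?_⟩
  rw [← Ideal.Quotient.eq, ← ha]
  rfl


theorem conductor_aux (K : Type*) [Field K] [NumberField K] [Algebra K L] [IsGaloisGroup G K L]
    (P : Ideal (𝓞 L)) [hPm : P.IsMaximal] (hP0 : P ≠ ⊥)
    (hin : ∀ (g : G) (x : 𝓞 L), g • x - x ∈ P) :
    ∃ (π : 𝓞 L) (s : 𝓞 K), algebraMap (𝓞 K) (𝓞 L) s ∉ P ∧
      ∀ b : 𝓞 L, s • b ∈ Algebra.adjoin (𝓞 K) {π} := by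
  have hPp : P.IsPrime := hPm.isPrime
  obtain ⟨π, hπ, hπ2⟩ : ∃ π ∈ P, π ∉ P ^ 2 := by
    by_contra! h
    have h1 : P ≤ P ^ 2 := h
    have h2 : P ^ 2 < P ^ 1 := Ideal.pow_right_strictAnti P hP0 hPm.ne_top (by norm_num)
    rw [pow_one] at h2
    exact absurd h1 (not_le_of_gt h2)
  let p := P.under (𝓞 K)
  have hpm : p.IsMaximal := Ideal.IsMaximal.under (𝓞 K) P
  let S := Algebra.adjoin (𝓞 K) {π}
  have hπS : π ∈ S := Algebra.subset_adjoin rfl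
  have happ : ∀ n : ℕ, ∀ b : 𝓞 L, ∃ c ∈ S, b - c ∈ P ^ n := by
    intro n
    induction n with
    | zero => exact fun b => ⟨0, S.zero_mem, by simp⟩
    | succ n ih =>
      intro b
      obtain ⟨c, hc, hbc⟩ := ih b
      obtain ⟨h1, h2⟩ := pow_unif hPp hP0 hπ hπ2 n
      obtain ⟨d, e, he, hde⟩ := Ideal.exists_mul_add_mem_pow_succ hP0 (π ^ n) (b - c) h1 h2 hbc
      obtain ⟨a, ha⟩ := surj_aux (G := G) K P hP0 hin d
      refine ⟨c + π ^ n * algebraMap (𝓞 K) (𝓞 L) a, S.add_mem hc (S.mul_mem (S.pow_mem hπS n)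
        (S.algebraMap_mem a)), ?_⟩
      have : b - (c + π ^ n * algebraMap (𝓞 K) (𝓞 L) a) =
          π ^ n * (d - algebraMap (𝓞 K) (𝓞 L) a) + e := by
        linear_combination -hde
      rw [this]
      refine add_mem ?_ he
      rw [pow_succ]
      exact Ideal.mul_mem_mul h1 ha
  have hrad : P ≤ (p.map (algebraMap (𝓞 K) (𝓞 L))).radical := by
    rw [Ideal.radical_eq_sInf]
    refine le_sInf ?_
    rintro Q ⟨hQ, hQp⟩
    have h1 : p ≤ Q.under (𝓞 K) := Ideal.map_le_iff_le_comap.mp hQ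
    have h2 : p = Q.under (𝓞 K) := hpm.eq_of_le (Ideal.IsPrime.ne_top inferInstance) h1
    obtain ⟨g, hg⟩ := Algebra.IsInvariant.exists_smul_of_under_eq (𝓞 K) (𝓞 L) G P Q h2
    intro x hx
    rw [hg, Ideal.mem_pointwise_smul_iff_inv_smul_mem]
    have := add_mem (hin g⁻¹ x) hx
    simpa using this
  obtain ⟨n, hn⟩ := Ideal.exists_pow_le_of_le_radical_of_fg hrad (IsNoetherian.noetherian _)
  let S' : Submodule (𝓞 K) (𝓞 L) := Subalgebra.toSubmodule S
  obtain ⟨r, hr, hr'⟩ := Submodule.exists_sub_one_mem_and_smul_eq_zero_of_fg_of_le_smul p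
    (⊤ : Submodule (𝓞 K) (𝓞 L ⧸ S')) Module.Finite.fg_top (by
      rintro x -
      obtain ⟨b, rfl⟩ := Submodule.Quotient.mk_surjective _ x
      obtain ⟨c, hc, hbc⟩ := happ n b
      have h1 : b - c ∈ p • (⊤ : Submodule (𝓞 K) (𝓞 L)) := by
        rw [Ideal.smul_top_eq_map]
        exact hn hbc
      have h2 : (Submodule.Quotient.mk b : 𝓞 L ⧸ S') = S'.mkQ (b - c) := by
        rw [Submodule.mkQ_apply, Submodule.Quotient.eq]
        simpa using (show c ∈ S' from hc)
      rw [h2]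
      have h3 := Submodule.mem_map_of_mem (f := S'.mkQ) h1
      rw [Submodule.map_smul''] at h3
      exact Submodule.smul_mono le_rfl le_top h3)
  refine ⟨π, r, ?_, fun b => ?_⟩
  · intro h
    have h1 : r ∈ p := h
    apply hpm.ne_top
    rw [Ideal.eq_top_iff_one]
    have := sub_mem h1 hr
    simpa using this
  · have := hr' (Submodule.Quotient.mk b) trivial
    rw [← Submodule.Quotient.mk_smul, Submodule.Quotient.mk_eq_zero] at this
    exact this

theorem totram_aux (K : Type*) [Field K] [NumberField K] [Algebra K L] [IsGaloisGroup G K L]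
    [Fintype G] [DecidableEq G] (P : Ideal (𝓞 L)) [hPm : P.IsMaximal] (hP0 : P ≠ ⊥)
    (hin : ∀ (g : G) (x : 𝓞 L), g • x - x ∈ P) :
    ∃ s : 𝓞 L, s ∉ P ∧ ∀ d ∈ differentIdeal (𝓞 K) (𝓞 L),
      s * d ∈ ∏ g ∈ Finset.univ.erase (1 : G), ramI (L := L) g := by
  have hG : IsGalois K L := IsGaloisGroup.isGalois G K L
  obtain ⟨π, s, hs, hsb⟩ := conductor_aux (G := G) K P hP0 hin
  have hs0 : s ≠ 0 := by rintro rfl; simp at hs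
  have hB : ∀ b : 𝓞 L, algebraMap (𝓞 L) L b ∈ Algebra.adjoin K {algebraMap (𝓞 L) L π} := by
    intro b
    have h1 : algebraMap (𝓞 L) L (s • b) ∈ Algebra.adjoin K {algebraMap (𝓞 L) L π} := by
      have h2 : ∀ y ∈ Algebra.adjoin (𝓞 K) {π}, algebraMap (𝓞 L) L y ∈
          Algebra.adjoin K {algebraMap (𝓞 L) L π} := by
        intro y hy
        induction hy using Algebra.adjoin_induction with
        | mem x hx => rw [Set.mem_singleton_iff.mp hx]; exact Algebra.subset_adjoin rfl
        | algebraMap r =>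
          rw [← IsScalarTower.algebraMap_apply, IsScalarTower.algebraMap_apply (𝓞 K) K L]
          exact Subalgebra.algebraMap_mem _ _
        | add x y _ _ hx hy => rw [map_add]; exact add_mem hx hy
        | mul x y _ _ hx hy => rw [map_mul]; exact mul_mem hx hy
      exact h2 _ (hsb b)
    have h3 : algebraMap (𝓞 L) L b = (algebraMap (𝓞 K) K s)⁻¹ • algebraMap (𝓞 L) L (s • b) := by
      have : algebraMap (𝓞 L) L (s • b) = (algebraMap (𝓞 K) K s) • algebraMap (𝓞 L) L b := by
        rw [Algebra.smul_def, map_mul, Algebra.smul_def, ← IsScalarTower.algebraMap_apply,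
          ← IsScalarTower.algebraMap_apply]
      rw [this, smul_smul, inv_mul_cancel₀, one_smul]
      simpa using hs0
    rw [h3]
    exact Subalgebra.smul_mem _ h1 _
  have hgen : Algebra.adjoin K {algebraMap (𝓞 L) L π} = ⊤ := by
    rw [eq_top_iff]
    rintro y -
    obtain ⟨a, b, hb, rfl⟩ := IsFractionRing.div_surjective (𝓞 L) y
    rw [div_eq_mul_inv]
    refine mul_mem (hB a) ?_
    exact Subalgebra.inv_mem_of_algebraic (A := Algebra.adjoin K {algebraMap (𝓞 L) L π})
      (x := ⟨_, hB b⟩) (Algebra.IsAlgebraic.isAlgebraic _)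
  have hc := conductor_mul_differentIdeal (𝓞 K) K L π hgen
  refine ⟨algebraMap (𝓞 K) (𝓞 L) s, hs, fun d hd => ?_⟩
  have h1 : algebraMap (𝓞 K) (𝓞 L) s ∈ conductor (𝓞 K) π := by
    intro b
    rw [← Algebra.smul_def]
    exact hsb b
  have h2 := Ideal.mul_mem_mul h1 hd
  rw [hc] at h2
  exact (Ideal.span_singleton_le_iff_mem _).mpr (minpoly_aux K π hgen) h2

theorem ramI_one : ramI (L := L) (1 : G) = ⊥ := by
  rw [ramI, Ideal.span_eq_bot]
  rintro _ ⟨x, rfl⟩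
  simp

theorem diff_eq (K : Type*) [Field K] [NumberField K] [Algebra K L] [IsGaloisGroup G K L]
    [Fintype G] [DecidableEq G] :
    differentIdeal (𝓞 K) (𝓞 L) = ∏ g ∈ Finset.univ.erase (1 : G), ramI (L := L) g := by
  have hG : IsGalois K L := IsGaloisGroup.isGalois G K L
  refine le_antisymm ?_ (prod_ramI_le K)
  intro d hd
  -- the ideal of multipliers
  set J := ∏ g ∈ Finset.univ.erase (1 : G), ramI (L := L) g with hJ
  by_contra hdJ
  let C : Ideal (𝓞 L) := Submodule.colon J {d}
  have hC : ∀ s, s ∈ C ↔ s * d ∈ J := fun s => by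
    simp [C, Submodule.mem_colon_singleton]
  have hC1 : C ≠ ⊤ := by
    rw [Ne, Ideal.eq_top_iff_one, hC, one_mul]
    exact hdJ
  obtain ⟨P, hPm, hPC⟩ := Ideal.exists_le_maximal C hC1
  have hP0 : P ≠ ⊥ := by
    intro h
    exact NumberField.RingOfIntegers.not_isField L (Ring.isField_iff_maximal_bot.mpr (h ▸ hPm))
  classical
  let E := P.inertia G
  let T : IntermediateField K L := FixedPoints.intermediateField E
  have hE : IsGaloisGroup E T L := IsGaloisGroup.subgroup G K L E
  have : Fintype E := Fintype.ofFinite E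
  obtain ⟨s, hs, hsd⟩ := totram_aux (G := E) T P hP0 (fun g x => g.2 x)
  have hle : differentIdeal (𝓞 K) (𝓞 L) ≤ differentIdeal (𝓞 T) (𝓞 L) := by
    rw [differentIdeal_eq_differentIdeal_mul_differentIdeal (𝓞 K) (𝓞 T) (𝓞 L)]
    exact Ideal.mul_le_left
  have h1 := hsd d (hle hd)
  -- factor the product
  have hne : ∀ g : G, g ∉ E → ∃ x ∈ ramI (L := L) g, x ∉ P := by
    intro g hg
    by_contra! h
    exact hg fun x => h _ (ramI_mem g x)
  have h2 : J = (∏ g ∈ Finset.univ.filter (fun g => g ∉ E), ramI (L := L) g) *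
      ∏ g ∈ Finset.univ.erase (1 : E), ramI (L := L) g := by
    have h3 : ∏ g ∈ Finset.univ.erase (1 : E), ramI (L := L) g =
        ∏ g ∈ (Finset.univ.erase (1 : G)).filter (fun g => g ∈ E), ramI (L := L) g := by
      refine Finset.prod_bij (fun g _ => (g : G)) ?_ ?_ ?_ ?_
      · intro g hg
        simpa using hg
      · intro a _ b _ h
        exact Subtype.ext h
      · intro b hb
        simp only [Finset.mem_filter, Finset.mem_erase, Finset.mem_univ, and_true] at hb
        exact ⟨⟨b, hb.2⟩, by simpa using hb.1, rfl⟩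
      · intro g _
        rfl
    rw [h3, hJ, ← Finset.prod_filter_mul_prod_filter_not _ (fun g => g ∈ E), mul_comm]
    congr 2
    ext g
    simp only [Finset.mem_filter, Finset.mem_erase, Finset.mem_univ, and_true, true_and]
    refine ⟨fun h => h.2, fun h => ⟨?_, h⟩⟩
    rintro rfl
    exact h E.one_mem
  choose! f hf hfP using hne
  have hPp := hPm.isPrime
  have h4 : (∏ g ∈ Finset.univ.filter (fun g => g ∉ E), f g) * s ∈ C := by
    rw [hC, h2, mul_assoc]
    refine Ideal.mul_mem_mul (Ideal.prod_mem_prod fun g hg => hf g (by simpa using hg)) h1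
  rcases hPp.mem_or_mem (hPC h4) with h5 | h5
  · obtain ⟨g, hg, h6⟩ := (Ideal.IsPrime.prod_mem_iff).mp h5
    exact hfP g (by simpa using hg) h6
  · exact hs h5


theorem natCard_quot_equiv {R : Type*} [CommRing R] (e : R ≃+* R) (I : Ideal R) :
    Nat.card (R ⧸ I.map (e : R →+* R)) = Nat.card (R ⧸ I) :=
  (Nat.card_congr (Ideal.quotientEquiv I (I.map (e : R →+* R)) e rfl).toEquiv).symm

theorem absNorm_ramI_conj (k g : G) :
    Ideal.absNorm (ramI (L := L) (k * g * k⁻¹)) = Ideal.absNorm (ramI (L := L) g) := by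
  have h : ramI (L := L) (k * g * k⁻¹) =
      (ramI g).map ((MulSemiringAction.toRingEquiv G (𝓞 L) k : 𝓞 L ≃+* 𝓞 L) : 𝓞 L →+* 𝓞 L) := by
    rw [ramI, ramI, Ideal.map_span]
    congr 1
    ext y
    constructor
    · rintro ⟨x, rfl⟩
      refine ⟨g • k⁻¹ • x - k⁻¹ • x, ⟨k⁻¹ • x, rfl⟩, ?_⟩
      simp [smul_sub, mul_smul]
    · rintro ⟨_, ⟨x, rfl⟩, rfl⟩
      refine ⟨k • x, ?_⟩
      simp [smul_sub, mul_smul]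
  rw [h, Ideal.absNorm_apply, Ideal.absNorm_apply]
  exact natCard_quot_equiv _ _

end Diff

section Gassmann

theorem card_conj {G : Type*} [Group G] [Finite G] (H : Subgroup G) (x : G) :
    Nat.card {g : G // g⁻¹ * x * g ∈ H} = Nat.card H * Nat.card (MulAction.fixedBy (G ⧸ H) x) := by
  rw [← Nat.card_prod]
  refine (Nat.card_congr (Equiv.trans (Equiv.subtypeEquivRight ?_)
    (QuotientGroup.preimageMkEquivSubgroupProdSet H (MulAction.fixedBy (G ⧸ H) x))))
  intro g
  change _ ∈ H ↔ x • (g : G ⧸ H) = (g : G ⧸ H)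
  rw [eq_comm, show x • (g : G ⧸ H) = ((x * g : G) : G ⧸ H) from rfl, QuotientGroup.eq, mul_assoc]

theorem gassmann {G : Type*} [Group G] [Fintype G] (H H' : Subgroup G)
    [Fintype H] [Fintype H']
    (hcard : Nat.card H = Nat.card H')
    (hf : ∀ x : G, Nat.card (MulAction.fixedBy (G ⧸ H) x) = Nat.card (MulAction.fixedBy (G ⧸ H') x))
    (n : G → ℕ) (hn : ∀ k g, n (k * g * k⁻¹) = n g) :
    ∏ h : H, n h = ∏ h : H', n h := by
  classical
  have key : ∀ (H : Subgroup G) [Fintype H], (∏ h : H, n h) ^ (Fintype.card G) =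
      ∏ x : G, n x ^ (Nat.card H * Nat.card (MulAction.fixedBy (G ⧸ H) x)) := by
    intro H _
    have h1 : ∀ g : G, ∏ h : H, n h = ∏ x : G, if g⁻¹ * x * g ∈ H then n x else 1 := by
      intro g
      rw [← (MulAut.conj g).toEquiv.prod_comp, ← Finset.prod_filter]
      refine Finset.prod_bij (fun h _ => (h : G)) ?_ ?_ ?_ ?_
      · intro h _
        simp [mul_assoc]
      · intro a _ b _ h
        exact Subtype.ext h
      · intro b hb
        simp [mul_assoc] at hb
        exact ⟨⟨b, hb⟩, Finset.mem_univ _, rfl⟩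
      · intro h _
        simp [hn]
    rw [← Finset.card_univ, ← Finset.prod_const, Finset.prod_congr rfl (fun g _ => h1 g),
      Finset.prod_comm]
    refine Finset.prod_congr rfl fun x _ => ?_
    rw [← card_conj, ← Finset.prod_filter, Finset.prod_const, Nat.card_eq_fintype_card,
      Fintype.card_subtype]
  have h1 := key H
  have h2 := key H'
  simp only [hf, hcard] at h1
  exact Nat.pow_left_injective Fintype.card_ne_zero (h1.trans h2.symm)

end Gassmann
section PSL

/-- companion matrix -/
def compM (t : ZMod 7) : SL(2, ZMod 7) := ⟨!![0, -1; 1, t], by simp [Matrix.det_fin_two_of]⟩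

/-- trace -/
def trM (x : SL(2, ZMod 7)) : ZMod 7 := x 0 0 + x 1 1

theorem form_one : ∀ A B C : ZMod 7, B * B + 4 * A * C ≠ 0 →
    ∃ x y : ZMod 7, A * x * x + B * x * y - C * y * y = 1 := by decide +kernel

theorem conj_comp (x : SL(2, ZMod 7)) (h : trM x * trM x ≠ 4) :
    ∃ p : SL(2, ZMod 7), x = p * compM (trM x) * p⁻¹ := by
  have hd : x 0 0 * x 1 1 - x 0 1 * x 1 0 = 1 := by
    have := x.2
    rwa [Matrix.det_fin_two] at this
  unfold trM at h ⊢
  obtain ⟨v, w, hvw⟩ := form_one (x 1 0) (x 1 1 - x 0 0) (x 0 1) (by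
    intro h0
    apply h
    linear_combination h0 + 4 * hd)
  let p : SL(2, ZMod 7) := ⟨!![v, x 0 0 * v + x 0 1 * w; w, x 1 0 * v + x 1 1 * w], by
    rw [Matrix.det_fin_two_of]
    linear_combination hvw⟩
  have hp : x * p = p * compM (x 0 0 + x 1 1) := by
    apply Subtype.ext
    rw [Matrix.SpecialLinearGroup.coe_mul, Matrix.SpecialLinearGroup.coe_mul]
    change (x : Matrix (Fin 2) (Fin 2) (ZMod 7)) *
      !![v, x 0 0 * v + x 0 1 * w; w, x 1 0 * v + x 1 1 * w] =
      !![v, x 0 0 * v + x 0 1 * w; w, x 1 0 * v + x 1 1 * w] * !![0, -1; 1, x 0 0 + x 1 1]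
    ext i j
    fin_cases i <;> fin_cases j <;>
      simp [Matrix.mul_apply, Fin.sum_univ_two]
    · linear_combination (-v) * hd
    · linear_combination (-w) * hd
  exact ⟨p, eq_mul_inv_of_mul_eq hp⟩

/-- matrices of trace `t` -/
def trEquiv (t : ZMod 7) : {x : SL(2, ZMod 7) // trM x = t} ≃
    {q : ZMod 7 × ZMod 7 × ZMod 7 // q.1 * (t - q.1) - q.2.1 * q.2.2 = 1} where
  toFun x := ⟨(x.1 0 0, x.1 0 1, x.1 1 0), by
    have h := x.1.2
    rw [Matrix.det_fin_two] at h
    have h2 : x.1 0 0 + x.1 1 1 = t := x.2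
    simp only [← h2]
    linear_combination h⟩
  invFun q := ⟨⟨!![q.1.1, q.1.2.1; q.1.2.2, t - q.1.1], by
    rw [Matrix.det_fin_two_of]; exact q.2⟩, by simp [trM]⟩
  left_inv x := by
    obtain ⟨x, rfl⟩ := x
    ext i j
    fin_cases i <;> fin_cases j <;> simp [trM]
  right_inv q := by
    ext <;> simp

/-- number of matrices of trace `t` -/
def cntM (t : ZMod 7) : ℕ := if t * t = 4 then 49 else if t * t = 1 then 56 else 42

theorem card_tr : ∀ t : ZMod 7, Fintype.card {q : ZMod 7 × ZMod 7 × ZMod 7 //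
    q.1 * (t - q.1) - q.2.1 * q.2.2 = 1} = cntM t := by decide +kernel

theorem card_tr' (t : ZMod 7) :
    (Finset.univ.filter fun x : SL(2, ZMod 7) => trM x = t).card = cntM t := by
  rw [← card_tr t, ← Fintype.card_subtype]
  exact Fintype.card_congr (trEquiv t)

theorem unip (x : SL(2, ZMod 7)) (h : trM x = 2) : x ^ 7 = 1 := by
  have hd : x 0 0 * x 1 1 - x 0 1 * x 1 0 = 1 := by
    have := x.2
    rwa [Matrix.det_fin_two] at this
  unfold trM at h
  have h2 : ((x : Matrix (Fin 2) (Fin 2) (ZMod 7)) - 1) ^ 2 = 0 := by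
    ext i j
    rw [sq]
    fin_cases i <;> fin_cases j <;> simp [Matrix.mul_apply, Fin.sum_univ_two]
    · linear_combination x 0 0 * h - hd
    · linear_combination x 0 1 * h
    · linear_combination x 1 0 * h
    · linear_combination x 1 1 * h - hd
  haveI : Fact (Nat.Prime 7) := ⟨by norm_num⟩
  have h7 : ((x : Matrix (Fin 2) (Fin 2) (ZMod 7)) - 1) ^ 7 = 0 := by
    exact pow_eq_zero_of_le (by norm_num : 2 ≤ 7) h2
  rw [sub_pow_char_of_commute (p := 7) (Commute.one_right _), one_pow, sub_eq_zero] at h7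
  apply Subtype.ext
  simpa using h7

theorem comp3_pow : (compM 3) ^ 8 = 1 := by decide +kernel

theorem trM_neg (x : SL(2, ZMod 7)) : trM (-x) = - trM x := by
  simp [trM]; ring

theorem trM_comp (t : ZMod 7) : trM (compM t) = t := by simp [trM, compM]



theorem ftot : Nat.card SL(2, ZMod 7) = 336 := by
  rw [Nat.card_eq_fintype_card, ← Finset.card_univ,
    Finset.card_eq_sum_card_fiberwise (f := trM) (t := Finset.univ) (by simp)]
  simp only [card_tr']
  decide +kernel

theorem tr_cases : ∀ t : ZMod 7, t = 0 ∨ t = 1 ∨ t = 2 ∨ t = 3 ∨ t = -3 ∨ t = -2 ∨ t = -1 := by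
  decide +kernel

theorem sum_cases (f : ZMod 7 → ℕ) : ∑ t, f t = f 0 + f 1 + f 2 + f 3 + f (-3) + f (-2) + f (-1) := by
  have : (Finset.univ : Finset (ZMod 7)) = {0, 1, 2, 3, -3, -2, -1} := by decide +kernel
  rw [this]
  rw [Finset.sum_insert (by decide), Finset.sum_insert (by decide), Finset.sum_insert (by decide), Finset.sum_insert (by decide), Finset.sum_insert (by decide), Finset.sum_insert (by decide), Finset.sum_singleton]
  ring

/-- values of the permutation character -/
def permC (x : SL(2, ZMod 7)) : ℕ := if x = 1 ∨ x = -1 then 7 else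
  if trM x * trM x = 4 then 0 else if trM x = 0 then 3 else 1

/-- class functions on SL -/
theorem class_fun (f : SL(2, ZMod 7) → ℕ) (hc : ∀ p x, f (p * x * p⁻¹) = f x)
    (hneg : ∀ x, f (-x) = f x) (h1 : f 1 = 7) (hu : ∀ x, trM x = 2 → x ≠ 1 → f x = 0)
    (hs : ∑ x, f x = 336) (hodd : f (compM 3) % 2 = 1) (x : SL(2, ZMod 7)) : f x = permC x := by
  have hco : ∀ x, trM x * trM x ≠ 4 → f x = f (compM (trM x)) := by
    intro x hx
    obtain ⟨p, hp⟩ := conj_comp x hx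
    conv_lhs => rw [hp]
    exact hc _ _
  have hn : ∀ t : ZMod 7, t * t ≠ 4 → f (compM (-t)) = f (compM t) := by
    intro t ht
    rw [← hneg (compM t), hco (-compM t), trM_neg, trM_comp]
    rw [trM_neg, trM_comp]; simpa using ht
  have hF : ∀ t : ZMod 7, t * t ≠ 4 → ∑ x with trM x = t, f x = cntM t * f (compM t) := by
    intro t ht
    rw [← card_tr' t, ← smul_eq_mul, ← Finset.sum_const]
    refine Finset.sum_congr rfl fun x hx => ?_
    simp only [Finset.mem_filter, Finset.mem_univ, true_and] at hx
    subst hx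
    exact hco x ht
  have hF2 : ∑ x with trM x = 2, f x = 7 := by
    rw [Finset.sum_eq_single 1, h1]
    · intro b hb hb1
      simp only [Finset.mem_filter, Finset.mem_univ, true_and] at hb
      exact hu b hb hb1
    · intro h
      refine absurd (Finset.mem_filter.mpr ⟨Finset.mem_univ _, ?_⟩) h
      simp [trM, one_add_one_eq_two]
  have hF2' : ∑ x with trM x = -2, f x = 7 := by
    refine Eq.trans ?_ hF2
    refine Finset.sum_nbij' (fun x => -x) (fun x => -x) ?_ ?_ ?_ ?_ ?_
    · intro a ha
      simp only [Finset.mem_filter, Finset.mem_univ, true_and] at ha ⊢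
      rw [trM_neg, ha, neg_neg]
    · intro a ha
      simp only [Finset.mem_filter, Finset.mem_univ, true_and] at ha ⊢
      rw [trM_neg, ha]
    · intro a _; exact neg_neg a
    · intro a _; exact neg_neg a
    · intro a _; exact (hneg a).symm
  rw [← Finset.sum_fiberwise _ trM f, sum_cases, hF2, hF2', hF 0 (by decide), hF 1 (by decide),
    hF 3 (by decide), hF (-3) (by decide), hF (-1) (by decide), hn 1 (by decide), hn 3 (by decide),
    show cntM 0 = 42 by decide, show cntM 1 = 56 by decide, show cntM 3 = 42 by decide,
    show cntM (-1) = 56 by decide, show cntM (-3) = 42 by decide] at hs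
  have e0 : f (compM 0) = 3 := by omega
  have e1 : f (compM 1) = 1 := by omega
  have e3 : f (compM 3) = 1 := by omega
  have e6 := hn 1 (by decide)
  have e4 := hn 3 (by decide)
  unfold permC
  split_ifs with c1 c2 c3
  · rcases c1 with rfl | rfl
    · exact h1
    · rw [hneg, h1]
  · have : ∀ t : ZMod 7, t * t = 4 → t = 2 ∨ t = -2 := by decide
    push Not at c1
    rcases this _ c2 with h | h
    · exact hu x h c1.1
    · rw [← hneg]
      refine hu _ (by rw [trM_neg, h, neg_neg]) fun h => c1.2 (by rw [← h, neg_neg])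
  · rw [hco x c2, c3, e0]
  · rw [hco x c2]
    rcases tr_cases (trM x) with h | h | h | h | h | h | h
    · exact absurd h c3
    · rw [h, e1]
    · exact absurd (by rw [h]; decide) c2
    · rw [h, e3]
    · rw [h, e4, e3]
    · exact absurd (by rw [h]; decide) c2
    · rw [h, e6, e1]

theorem burnside_aux {S G : Type*} [Group S] [Fintype S] [Group G] [Finite G] (φ : S →* G)
    (hφ : Function.Surjective φ) (H : Subgroup G) :
    ∑ x : S, Nat.card (MulAction.fixedBy (G ⧸ H) (φ x)) = Nat.card S := by
  letI : MulAction S (G ⧸ H) := MulAction.compHom _ φ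
  classical
  letI : Fintype (G ⧸ H) := Fintype.ofFinite _
  haveI : MulAction.IsPretransitive S (G ⧸ H) := by
    constructor
    intro a b
    obtain ⟨g, hg⟩ := MulAction.exists_smul_eq G a b
    obtain ⟨y, rfl⟩ := hφ g
    exact ⟨y, hg⟩
  haveI : Fintype (Quotient (MulAction.orbitRel S (G ⧸ H))) := Fintype.ofFinite _
  have := MulAction.sum_card_fixedBy_eq_card_orbits_mul_card_group S (G ⧸ H)
  have ho : Fintype.card (Quotient (MulAction.orbitRel S (G ⧸ H))) = 1 := by
    rw [Fintype.card_eq_one_iff]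
    refine ⟨Quotient.mk _ ((1 : G) : G ⧸ H), ?_⟩
    intro q
    induction q using Quotient.inductionOn with
    | h q =>
    apply Quotient.sound
    exact MulAction.exists_smul_eq S _ _
  rw [ho, one_mul, ← Nat.card_eq_fintype_card] at this
  rw [← this]
  refine Finset.sum_congr rfl fun y _ => ?_
  rw [← Nat.card_eq_fintype_card]
  rfl

theorem fix_count {G : Type*} [Group G] [Finite G] (φ : SL(2, ZMod 7) →* G)
    (hφ : Function.Surjective φ) (hk : ∀ x, φ x = 1 → x = 1 ∨ x = -1) (hm : φ (-1) = 1)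
    (H : Subgroup G) (hH : H.index = 7) (x : SL(2, ZMod 7)) :
    Nat.card (MulAction.fixedBy (G ⧸ H) (φ x)) = permC x := by
  have hcG : Nat.card (G ⧸ H) = 7 := hH
  refine class_fun (fun x => Nat.card (MulAction.fixedBy (G ⧸ H) (φ x))) ?_ ?_ ?_ ?_ ?_ ?_ x
  · intro p x
    simp only [map_mul, map_inv]
    rw [← MulAction.smul_fixedBy]
    exact Nat.card_congr (MulAction.toPerm (φ p) |>.image _ |>.symm)
  · intro x
    show Nat.card (MulAction.fixedBy (G ⧸ H) (φ (-x))) = _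
    rw [← neg_one_mul, map_mul, hm, one_mul]
  · show Nat.card (MulAction.fixedBy (G ⧸ H) (φ 1)) = _
    rw [map_one, MulAction.fixedBy_one_eq_univ]
    rw [Nat.card_coe_set_eq, Set.ncard_univ, hcG]
  · intro x hx hx1
    show Nat.card (MulAction.fixedBy (G ⧸ H) (φ x)) = _
    rw [Finite.card_eq_zero_iff]
    constructor
    rintro ⟨q, hq⟩
    obtain ⟨g, rfl⟩ := QuotientGroup.mk_surjective q
    rw [MulAction.mem_fixedBy, eq_comm, show φ x • (g : G ⧸ H) = ((φ x * g : G) : G ⧸ H) from rfl,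
      QuotientGroup.eq] at hq
    have hcH : (Nat.card H) ∣ 48 := by
      have h1 : Nat.card H * H.index = Nat.card G := H.card_mul_index
      have h2 := Subgroup.card_dvd_of_surjective φ hφ
      rw [ftot, ← h1, hH] at h2
      exact Nat.dvd_of_mul_dvd_mul_right (by norm_num : 0 < 7) h2
    have h7 : (⟨_, hq⟩ : H) ^ 7 = 1 := by
      apply Subtype.ext
      have := unip x hx
      have h3 : g⁻¹ * (φ x * g) = g⁻¹ * φ x * (g⁻¹)⁻¹ := by group
      simp only [Subgroup.coe_pow, Subgroup.coe_one]
      rw [h3, conj_pow, ← map_pow, this]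
      simp
    have h48 : (⟨_, hq⟩ : H) ^ 48 = 1 := by
      obtain ⟨c, hc⟩ := hcH
      rw [hc, pow_mul, pow_card_eq_one', one_pow]
    have h1 : (⟨_, hq⟩ : H) = 1 := by
      have h49 : (⟨_, hq⟩ : H) ^ 49 = 1 := by
        rw [show 49 = 7 * 7 by norm_num, pow_mul, h7, one_pow]
      rwa [pow_succ, h48, one_mul] at h49
    have h1' : g⁻¹ * (φ x * g) = 1 := congrArg Subtype.val h1
    have : φ x = 1 := by
      have := congrArg (fun z => g * z * g⁻¹) h1'
      simpa [mul_assoc] using this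
    rcases hk x this with h | h
    · exact hx1 h
    · rw [h] at hx
      revert hx
      rw [trM_neg]
      simp [trM]
      decide
  · exact (burnside_aux φ hφ H).trans ftot
  · show Nat.card (MulAction.fixedBy (G ⧸ H) (φ (compM 3))) % 2 = 1
    have hp : IsPGroup 2 (Subgroup.zpowers (φ (compM 3))) := by
      intro z
      refine ⟨3, ?_⟩
      obtain ⟨z, n, rfl⟩ := z
      apply Subtype.ext
      simp only [Subgroup.coe_pow, Subgroup.coe_one]
      rw [← zpow_natCast, ← zpow_mul, mul_comm, zpow_mul, zpow_natCast, ← map_pow]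
      norm_num [comp3_pow]
    haveI : Fact (Nat.Prime 2) := ⟨Nat.prime_two⟩
    have := hp.card_modEq_card_fixedPoints (G ⧸ H)
    rw [hcG] at this
    have h2 : MulAction.fixedPoints (Subgroup.zpowers (φ (compM 3))) (G ⧸ H)
        = MulAction.fixedBy (G ⧸ H) (φ (compM 3)) := by
      ext q
      constructor
      · intro h
        exact h ⟨_, Subgroup.mem_zpowers _⟩
      · intro h
        rintro ⟨z, hz⟩
        have : z ∈ MulAction.stabilizer G q := by
          have : Subgroup.zpowers (φ (compM 3)) ≤ MulAction.stabilizer G q := by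
            rw [Subgroup.zpowers_le]; exact h
          exact this hz
        exact this
    rw [h2] at this
    have := this.symm
    unfold Nat.ModEq at this
    omega

end PSL
section Final

theorem discr_pos_aux {N : Type*} [Field N] [NumberField N] [IsGalois ℚ N]
    (hc : commutator (N ≃ₐ[ℚ] N) = ⊤) (K : IntermediateField ℚ N) :
    0 < NumberField.discr K := by
  classical
  let b := NumberField.integralBasis K
  have hcard : Fintype.card (Module.Free.ChooseBasisIndex ℤ (𝓞 K)) = Fintype.card (K →ₐ[ℚ] N) := by
    rw [← Module.finrank_eq_card_basis b]
    refine (AlgHom.card_of_splits ℚ K N fun x => ?_).symm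
    rw [← minpoly.algebraMap_eq (algebraMap K N).injective x]
    exact Normal.splits inferInstance _
  let e : Module.Free.ChooseBasisIndex ℤ (𝓞 K) ≃ (K →ₐ[ℚ] N) := Fintype.equivOfCardEq hcard
  let j : N →ₐ[ℚ] AlgebraicClosure N := IsScalarTower.toAlgHom ℚ N (AlgebraicClosure N)
  have hbij : Function.Bijective fun f : K →ₐ[ℚ] N => j.comp f := by
    rw [Fintype.bijective_iff_injective_and_card]
    constructor
    · intro f g hfg
      ext x
      exact j.injective (DFunLike.congr_fun hfg x)
    · rw [← hcard, ← Module.finrank_eq_card_basis b, AlgHom.card]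
  let e' := e.trans (Equiv.ofBijective _ hbij)
  have hM' := Algebra.discr_eq_det_embeddingsMatrixReindex_pow_two ℚ (AlgebraicClosure N) b e'
  set M := (Algebra.embeddingsMatrixReindex ℚ N b e).det with hMdef
  have hM : algebraMap ℚ N (NumberField.discr K) = M ^ 2 := by
    have hj : Function.Injective j := j.injective
    apply hj
    rw [NumberField.coe_discr, AlgHom.commutes, hM', map_pow, hMdef, AlgHom.map_det]
    congr 2
  let ψ : (N ≃ₐ[ℚ] N) →* Equiv.Perm (Module.Free.ChooseBasisIndex ℤ (𝓞 K)) :=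
    { toFun := fun σ =>
        { toFun := fun i => e.symm ((σ : N →ₐ[ℚ] N).comp (e i))
          invFun := fun i => e.symm ((σ.symm : N →ₐ[ℚ] N).comp (e i))
          left_inv := fun i => by
            apply e.injective
            ext x
            simp
          right_inv := fun i => by
            apply e.injective
            ext x
            simp }
      map_one' := by
        ext i
        apply e.injective
        ext x
        simp
      map_mul' := fun σ τ => by
        ext i
        apply e.injective
        ext x
        simp }
  have hsign : ∀ σ, Equiv.Perm.sign (ψ σ) = 1 := by
    intro σ
    have h1 := Abelianization.commutator_subset_ker (Equiv.Perm.sign.comp ψ)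
    rw [hc] at h1
    exact h1 (Subgroup.mem_top σ)
  have hfix : ∀ σ : N ≃ₐ[ℚ] N, σ M = M := by
    intro σ
    have h1 : σ M = ((Algebra.embeddingsMatrixReindex ℚ N b e).submatrix id (ψ σ)).det := by
      rw [hMdef, AlgEquiv.map_det]
      congr 1
      ext i j
      simp [Algebra.embeddingsMatrixReindex, Algebra.embeddingsMatrix, ψ]
    rw [h1, Matrix.det_permute', hsign]
    simp [hMdef]
  obtain ⟨q, hq⟩ := (IsGalois.mem_bot_iff_fixed M).mpr hfix
  have h2 : (NumberField.discr K : ℚ) = q ^ 2 := by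
    apply (algebraMap ℚ N).injective
    rw [hM, map_pow]
    congr 1
    exact hq.symm
  have h3 : (NumberField.discr K : ℚ) ≠ 0 := by exact_mod_cast NumberField.discr_ne_zero K
  have h4 : (0 : ℚ) < NumberField.discr K := lt_of_le_of_ne (h2 ▸ sq_nonneg q) h3.symm
  exact_mod_cast h4

theorem disc_formula {N : Type*} [Field N] [NumberField N] [IsGalois ℚ N]
    [DecidableEq (N ≃ₐ[ℚ] N)] (K : IntermediateField ℚ N)
    [Fintype (fixingSubgroup (N ≃ₐ[ℚ] N) (K : Set N))] :
    (NumberField.discr N).natAbs =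
      (∏ h : fixingSubgroup (N ≃ₐ[ℚ] N) (K : Set N),
        (if (h : N ≃ₐ[ℚ] N) = 1 then 1 else Ideal.absNorm (ramI (L := N) (h : N ≃ₐ[ℚ] N)))) *
      (NumberField.discr K).natAbs ^ Module.finrank K N := by
  classical
  rw [NumberField.natAbs_discr_eq_absNorm_differentIdeal_mul_natAbs_discr_pow K (𝓞 K) N (𝓞 N)]
  congr 1
  rw [diff_eq (G := fixingSubgroup (N ≃ₐ[ℚ] N) (K : Set N)) K, map_prod,
    ← Finset.mul_prod_erase Finset.univ _ (Finset.mem_univ 1)]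
  rw [if_pos (by simp), one_mul]
  refine Finset.prod_congr rfl fun h hh => ?_
  rw [if_neg]
  · rfl
  · intro h1
    exact (Finset.mem_erase.mp hh).1 (Subtype.ext h1)

theorem index_eq {N : Type*} [Field N] [NumberField N] [IsGalois ℚ N]
    (K : IntermediateField ℚ N) (h7 : Module.finrank ℚ K = 7) :
    (fixingSubgroup (N ≃ₐ[ℚ] N) (K : Set N)).index = 7 := by
  have h1 := (fixingSubgroup (N ≃ₐ[ℚ] N) (K : Set N)).card_mul_index
  rw [IsGaloisGroup.card_fixingSubgroup_eq_finrank (N ≃ₐ[ℚ] N) ℚ N K, IsGalois.card_aut_eq_finrank,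
    ← Module.finrank_mul_finrank ℚ K N, h7, mul_comm] at h1
  exact Nat.eq_of_mul_eq_mul_right Module.finrank_pos h1

theorem two_facts : (2 : ZMod 7) ≠ 0 ∧ (2 : ZMod 7) ^ 2 ≠ 1 := by decide

theorem sq_facts : ∀ r : ZMod 7, r ^ Fintype.card (Fin 2) = 1 → r = 1 ∨ r = -1 := by decide

end Final

/-- If `N/ℚ` is Galois with group `PSL₂(𝔽₇)` and `K₇ₐ`, `K₇ᵦ` are any two subfields of
`N` of degree 7 over `ℚ`, then they have equal discriminants. -/
theorem stmt12 (N : Type) [Field N] [NumberField N] [IsGalois ℚ N]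
    (hgal : Nonempty ((N ≃ₐ[ℚ] N) ≃* PSL(2, ZMod 7)))
    (K₇a K₇b : IntermediateField ℚ N)
    (h7a : Module.finrank ℚ K₇a = 7) (h7b : Module.finrank ℚ K₇b = 7) :
    NumberField.discr K₇a = NumberField.discr K₇b := by
  classical
  obtain ⟨ε⟩ := hgal
  have : Fact (Nat.Prime 7) := ⟨by norm_num⟩
  have hperf : Group.IsPerfect SL(2, ZMod 7) :=
    ⟨Matrix.SL2.commutator_eq_top (a := (2 : ZMod 7)) two_facts.1 two_facts.2⟩
  let φ : SL(2, ZMod 7) →* (N ≃ₐ[ℚ] N) := ε.symm.toMonoidHom.comp (QuotientGroup.mk' _)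
  have hφ : Function.Surjective φ := ε.symm.surjective.comp (QuotientGroup.mk'_surjective _)
  have hperfG : Group.IsPerfect (N ≃ₐ[ℚ] N) := Group.IsPerfect.ofSurjective hφ
  have hker : ∀ x, φ x = 1 ↔ x ∈ Subgroup.center SL(2, ZMod 7) := by
    intro x
    rw [← QuotientGroup.eq_one_iff]
    exact (EmbeddingLike.map_eq_one_iff (f := ε.symm))
  have hk : ∀ x, φ x = 1 → x = 1 ∨ x = -1 := by
    intro x hx
    rw [hker, Matrix.SpecialLinearGroup.mem_center_iff] at hx
    obtain ⟨r, hr, hrx⟩ := hx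
    rcases sq_facts r hr with rfl | rfl
    · left
      apply Subtype.ext
      rw [← hrx]; simp
    · right
      apply Subtype.ext
      rw [← hrx]
      ext i j
      fin_cases i <;> fin_cases j <;> simp
  have hm : φ (-1) = 1 := by
    rw [hker, Subgroup.mem_center_iff]
    intro g
    simp
  have hia := index_eq K₇a h7a
  have hib := index_eq K₇b h7b
  have hfa : Module.finrank K₇a N = Module.finrank K₇b N := by
    have h1 := Module.finrank_mul_finrank ℚ K₇a N
    have h2 := Module.finrank_mul_finrank ℚ K₇b N
    rw [h7a] at h1
    rw [h7b] at h2
    omega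
  letI := Fintype.ofFinite (fixingSubgroup (N ≃ₐ[ℚ] N) (K₇a : Set N))
  letI := Fintype.ofFinite (fixingSubgroup (N ≃ₐ[ℚ] N) (K₇b : Set N))
  have hg := gassmann (fixingSubgroup (N ≃ₐ[ℚ] N) (K₇a : Set N))
    (fixingSubgroup (N ≃ₐ[ℚ] N) (K₇b : Set N))
    (by rw [IsGaloisGroup.card_fixingSubgroup_eq_finrank (N ≃ₐ[ℚ] N) ℚ N K₇a,
          IsGaloisGroup.card_fixingSubgroup_eq_finrank (N ≃ₐ[ℚ] N) ℚ N K₇b, hfa])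
    (by
      intro g
      obtain ⟨x, rfl⟩ := hφ g
      rw [fix_count φ hφ hk hm _ hia, fix_count φ hφ hk hm _ hib])
    (fun g => if g = 1 then 1 else Ideal.absNorm (ramI (L := N) g))
    (by
      intro k g
      simp only [conj_eq_one_iff, absNorm_ramI_conj])
  have hA := disc_formula K₇a
  have hB := disc_formula K₇b
  rw [hg] at hA
  rw [hA, hfa] at hB
  have hN : (NumberField.discr N).natAbs ≠ 0 := Int.natAbs_ne_zero.mpr (NumberField.discr_ne_zero N)
  rw [hA] at hN
  have hpow := Nat.eq_of_mul_eq_mul_left (Nat.pos_of_ne_zero (left_ne_zero_of_mul hN)) hB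
  have habs := Nat.pow_left_injective (n := Module.finrank K₇b N)
    (Module.finrank_pos (R := K₇b) (M := N)).ne' hpow
  have pa := discr_pos_aux hperfG.commutator_eq_top K₇a
  have pb := discr_pos_aux hperfG.commutator_eq_top K₇b
  omega
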